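/- arXiv:2212.07012 — 5 statements merged into one kernel-verified Lean document; each statement's English description precedes it below -/
import Mathlib

section
/- Legendre relation: for every u ∈ ℂ with u ∉ Γ, u + ω₁ ∉ Γ and u + ω₂ ∉ Γ, one has ω₁·(ζ(u + ω₂) − ζ(u)) − ω₂·(ζ(u + ω₁) − ζ(u)) = 2πi. -/
/-!
The Legendre relation, by Eisenstein summation.

Put `γ = kω₁ + nω₂`. In the combination
`ω₁ (ζ(u + ω₂) - ζ(u)) - ω₂ (ζ(u + ω₁) - ζ(u))` the convergence terms `1/γ` and `u/γ²` cancel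
identically, so it is the absolutely convergent sum over `(k, n)` of
`ω₁ (1/(u + ω₂ - γ) - 1/(u - γ)) - ω₂ (1/(u + ω₁ - γ) - 1/(u - γ))`.
By Fubini it may be summed over `n` first. With `x k = (u - kω₁)/ω₂`, the symmetric partial sums
of `∑ₙ 1/(x - n)` converge to `π cot (πx)` (`tendsto_sum_inv_sub`), and the `1`-periodicity of
`x ↦ cot (πx)` kills the `ω₁`-part; the inner sum is thus
`π cot (π x k) - π cot (π x (k - 1))`. The outer sum telescopes, and its value `2πi` comes from
`cot (πz) → ∓i` as `Im z → ±∞`.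

Absolute convergence of the series for `ζ` follows from
`1/(u - γ) + 1/γ + u/γ² = u²/(γ² (u - γ))`, the inequality `a² b ≤ a³ + b³`, and the convergence of
`∑ ‖γ - x‖⁻³` over a lattice in the plane.
-/

/-- The rank-2 lattice generated by `ω₁` and `ω₂`. -/
def lattice (ω₁ ω₂ : ℂ) : Set ℂ := {z | ∃ k n : ℤ, z = (k : ℂ) * ω₁ + (n : ℂ) * ω₂}

/-- The Weierstrass zeta-function for the lattice generated by `ω₁` and `ω₂`. -/
noncomputable def wzeta (ω₁ ω₂ : ℂ) (u : ℂ) : ℂ :=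
  1 / u + ∑' kn : ℤ × ℤ,
    if kn = (0, 0) then 0
    else 1 / (u - ((kn.1 : ℂ) * ω₁ + (kn.2 : ℂ) * ω₂))
      + 1 / ((kn.1 : ℂ) * ω₁ + (kn.2 : ℂ) * ω₂)
      + u / ((kn.1 : ℂ) * ω₁ + (kn.2 : ℂ) * ω₂) ^ 2

open Filter Topology Complex

/-- The symmetric interval `[-(N+1), N+1]` adds two endpoints to `[-N, N]`. -/
lemma sum_symm_Icc_succ (f : ℤ → ℂ) (N : ℕ) :
    ∑ n ∈ Finset.Icc (-((N + 1 : ℕ) : ℤ)) ((N + 1 : ℕ) : ℤ), f n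
      = (∑ n ∈ Finset.Icc (-(N : ℤ)) N, f n) + f (N + 1) + f (-(N + 1)) := by
  have h : Finset.Icc (-((N + 1 : ℕ) : ℤ)) ((N + 1 : ℕ) : ℤ)
      = insert (-((N : ℤ) + 1)) (insert ((N : ℤ) + 1) (Finset.Icc (-(N : ℤ)) N)) := by
    ext x
    simp only [Finset.mem_Icc, Finset.mem_insert]
    push_cast
    omega
  rw [h, Finset.sum_insert, Finset.sum_insert]
  · ring
  · simp
  · simp only [Finset.mem_Icc, Finset.mem_insert]
    omega

lemma HasSum.tendsto_symm_Icc {f : ℤ → ℂ} {a : ℂ} (h : HasSum f a) :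
    Tendsto (fun N : ℕ ↦ ∑ n ∈ Finset.Icc (-(N : ℤ)) N, f n) atTop (𝓝 a) := by
  rw [HasSum, SummationFilter.unconditional_filter] at h
  refine h.comp (tendsto_atTop_finset_of_monotone ?_ ?_)
  · intro a b hab
    apply Finset.Icc_subset_Icc <;> omega
  · intro x
    refine ⟨x.natAbs, ?_⟩
    simp only [Finset.mem_Icc]
    omega

lemma sum_symm_Icc_telescope (f : ℤ → ℂ) (N : ℕ) :
    ∑ n ∈ Finset.Icc (-(N : ℤ)) N, (f n - f (n - 1)) = f N - f (-(N + 1)) := by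
  induction N with
  | zero => simp
  | succ N ih =>
    rw [sum_symm_Icc_succ, ih]
    push_cast
    rw [show (N : ℤ) + 1 - 1 = N by ring, show -((N : ℤ) + 1) - 1 = -(N + 1 + 1) by ring]
    ring

/-- The partial fraction expansion of the cotangent, as a symmetric limit. -/
lemma tendsto_sum_inv_sub {x : ℂ} (hx : x ∈ integerComplement) :
    Tendsto (fun N : ℕ ↦ ∑ n ∈ Finset.Icc (-(N : ℤ)) N, 1 / (x - n)) atTop
      (𝓝 (Real.pi * cot (Real.pi * x))) := by
  have h := (tendsto_logDeriv_euler_cot_sub hx).add_const (1 / x)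
  rw [sub_add_cancel] at h
  refine h.congr fun N ↦ ?_
  induction N with
  | zero => simp
  | succ N ih =>
    rw [sum_symm_Icc_succ, ← ih, Finset.sum_range_succ, cotTerm]
    push_cast
    ring

lemma tendsto_cot_of_im_atTop {z : ℕ → ℂ} (hz : Tendsto (fun N ↦ (z N).im) atTop atTop) :
    Tendsto (fun N ↦ cot (Real.pi * z N)) atTop (𝓝 (-I)) := by
  simp_rw [cot_pi_eq_exp_ratio]
  have he : Tendsto (fun N ↦ Complex.exp (2 * Real.pi * I * z N)) atTop (𝓝 0) := by
    rw [tendsto_exp_nhds_zero_iff]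
    have : (fun N ↦ (2 * Real.pi * I * z N).re) = fun N ↦ (-(2 * Real.pi)) * (z N).im := by
      ext N
      simp
    rw [this]
    exact hz.const_mul_atTop_of_neg (by linarith [Real.pi_pos])
  have h := (he.add_const 1).div ((tendsto_const_nhds (x := (1 : ℂ))).sub he |>.const_mul I)
    (by simp)
  simpa [Pi.div_def] using h

/-- The cotangent is odd, so its limit at `-i∞` follows from the one at `i∞`. -/
lemma tendsto_cot_of_im_atBot {z : ℕ → ℂ} (hz : Tendsto (fun N ↦ (z N).im) atTop atBot) :
    Tendsto (fun N ↦ cot (Real.pi * z N)) atTop (𝓝 I) := by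
  have h := (tendsto_cot_of_im_atTop (z := fun N ↦ -z N)
    (tendsto_neg_atBot_atTop.comp hz)).neg
  simpa [cot, neg_div, div_neg] using h

lemma cot_pi_add_one (x : ℂ) : cot (Real.pi * (x + 1)) = cot (Real.pi * x) := by
  rw [mul_add, mul_one, cot, cot, Complex.cos_add_pi, Complex.sin_add_pi, neg_div_neg_eq]

lemma linearIndependent_periods {ω₁ ω₂ : ℂ} (hω₂ : ω₂ ≠ 0) (hτ : 0 < (ω₁ / ω₂).im) :
    LinearIndependent ℝ ![ω₁, ω₂] := by
  rw [LinearIndependent.pair_iff]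
  intro s t h
  have h' : (s : ℂ) * (ω₁ / ω₂) + t = 0 := by
    field_simp
    simpa [mul_comm ω₂] using h
  have him := congrArg Complex.im h'
  have hs : s = 0 := by simpa [hτ.ne'] using him
  subst hs
  exact ⟨rfl, by simpa using h'⟩

lemma summable_norm_period_sub {ω₁ ω₂ : ℂ} (hω₂ : ω₂ ≠ 0) (hτ : 0 < (ω₁ / ω₂).im) (x : ℂ) :
    Summable fun kn : ℤ × ℤ ↦ ‖(kn.1 : ℂ) * ω₁ + (kn.2 : ℂ) * ω₂ - x‖⁻¹ ^ 3 := by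
  let L : PeriodPair := ⟨ω₁, ω₂, linearIndependent_periods hω₂ hτ⟩
  have h := ZLattice.summable_norm_sub_inv_pow L.lattice 3 (by simp) x
  rw [← L.latticeEquivProd.symm.toEquiv.summable_iff] at h
  refine h.congr fun kn ↦ ?_
  have := L.latticeEquiv_symm_apply kn
  simp only [Function.comp_apply, LinearEquiv.coe_toEquiv, this, L]

lemma period_ne_zero {ω₁ ω₂ : ℂ} (hω₂ : ω₂ ≠ 0) (hτ : 0 < (ω₁ / ω₂).im) {kn : ℤ × ℤ}
    (h : kn ≠ (0, 0)) : (kn.1 : ℂ) * ω₁ + (kn.2 : ℂ) * ω₂ ≠ 0 := by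
  intro h0
  have := LinearIndependent.pair_iff.1 (linearIndependent_periods hω₂ hτ) kn.1 kn.2
    (by simpa using h0)
  exact h (Prod.ext (by simpa using this.1) (by simpa using this.2))

/-- The summand of the zeta-function at the lattice point with coordinates `kn`; the summand at
the origin is the principal part `1 / u`. -/
noncomputable def zetaTerm (ω₁ ω₂ u : ℂ) (kn : ℤ × ℤ) : ℂ :=
  if kn = (0, 0) then 1 / u
  else 1 / (u - ((kn.1 : ℂ) * ω₁ + (kn.2 : ℂ) * ω₂))
    + 1 / ((kn.1 : ℂ) * ω₁ + (kn.2 : ℂ) * ω₂)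
    + u / ((kn.1 : ℂ) * ω₁ + (kn.2 : ℂ) * ω₂) ^ 2

lemma hasSum_zetaTerm {ω₁ ω₂ : ℂ} (hω₂ : ω₂ ≠ 0) (hτ : 0 < (ω₁ / ω₂).im) {u : ℂ}
    (hu : u ∉ lattice ω₁ ω₂) : HasSum (zetaTerm ω₁ ω₂ u) (wzeta ω₁ ω₂ u) := by
  have hs : Summable fun kn : ℤ × ℤ ↦ if kn = (0, 0) then (0 : ℂ)
      else 1 / (u - ((kn.1 : ℂ) * ω₁ + (kn.2 : ℂ) * ω₂))
        + 1 / ((kn.1 : ℂ) * ω₁ + (kn.2 : ℂ) * ω₂)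
        + u / ((kn.1 : ℂ) * ω₁ + (kn.2 : ℂ) * ω₂) ^ 2 := by
    refine Summable.of_norm_bounded (((summable_norm_period_sub hω₂ hτ 0).add
      (summable_norm_period_sub hω₂ hτ u)).mul_left (‖u‖ ^ 2)) fun kn ↦ ?_
    split_ifs with h
    · rw [norm_zero]
      positivity
    · have hg := period_ne_zero hω₂ hτ h
      have hgu : u - ((kn.1 : ℂ) * ω₁ + (kn.2 : ℂ) * ω₂) ≠ 0 := fun h0 ↦
        hu ⟨kn.1, kn.2, sub_eq_zero.1 h0⟩
      set g := (kn.1 : ℂ) * ω₁ + (kn.2 : ℂ) * ω₂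
      have e : 1 / (u - g) + 1 / g + u / g ^ 2 = u ^ 2 * (g⁻¹ ^ 2 * (u - g)⁻¹) := by
        field_simp
        ring
      rw [e, norm_mul, norm_mul, norm_pow, norm_pow, norm_inv, norm_inv, norm_sub_rev u g, sub_zero]
      have ha : 0 ≤ ‖g‖⁻¹ := by positivity
      have hb : 0 ≤ ‖g - u‖⁻¹ := by positivity
      gcongr
      generalize ‖g‖⁻¹ = a at *
      generalize ‖g - u‖⁻¹ = b at *
      rcases le_total a b with hab | hab
      · nlinarith [mul_le_mul_of_nonneg_right (pow_le_pow_left₀ ha hab 2) hb, pow_nonneg ha 3]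
      · nlinarith [mul_le_mul_of_nonneg_left hab (pow_nonneg ha 2), pow_nonneg hb 3]
  have h := (hasSum_ite_eq (0, 0) (1 / u)).add hs.hasSum
  convert h using 1
  · ext kn
    unfold zetaTerm
    split_ifs <;> simp
  · rfl

/-- The Legendre relation `ω₁ η₂ - ω₂ η₁ = 2πi`. -/
theorem legendre_relation (ω₁ ω₂ : ℂ) (hω₁ : ω₁ ≠ 0) (hω₂ : ω₂ ≠ 0)
    (hτ : 0 < (ω₁ / ω₂).im) (u : ℂ)
    (hu : u ∉ lattice ω₁ ω₂) (hu₁ : u + ω₁ ∉ lattice ω₁ ω₂)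
    (hu₂ : u + ω₂ ∉ lattice ω₁ ω₂) :
    ω₁ * (wzeta ω₁ ω₂ (u + ω₂) - wzeta ω₁ ω₂ u)
      - ω₂ * (wzeta ω₁ ω₂ (u + ω₁) - wzeta ω₁ ω₂ u)
      = 2 * Real.pi * Complex.I := by
  have h0 := hasSum_zetaTerm hω₂ hτ hu
  have h1 := hasSum_zetaTerm hω₂ hτ hu₁
  have h2 := hasSum_zetaTerm hω₂ hτ hu₂
  have hsum := ((h2.sub h0).mul_left ω₁).sub ((h1.sub h0).mul_left ω₂)
  -- The arguments of the cotangents, one for each row of the lattice.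
  set x : ℤ → ℂ := fun k ↦ (u - k * ω₁) / ω₂ with hx
  have hxZ (k : ℤ) : x k ∈ integerComplement := by
    rintro ⟨n, hn⟩
    refine hu ⟨k, n, ?_⟩
    simp only [hx] at hn
    field_simp at hn
    linear_combination -hn
  have hxZ1 (k : ℤ) : x k + 1 ∈ integerComplement := by
    rintro ⟨n, hn⟩
    refine hxZ k ⟨n - 1, ?_⟩
    push_cast
    rw [hn]
    ring
  have hterm (k n : ℤ) : ω₁ * (zetaTerm ω₁ ω₂ (u + ω₂) (k, n) - zetaTerm ω₁ ω₂ u (k, n))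
      - ω₂ * (zetaTerm ω₁ ω₂ (u + ω₁) (k, n) - zetaTerm ω₁ ω₂ u (k, n))
      = ω₁ / ω₂ * (1 / (x k + 1 - n) - 1 / (x k - n)) - (1 / (x (k - 1) - n) - 1 / (x k - n)) := by
    have e0 : 1 / (x k - n) = ω₂ * (1 / (u - (k * ω₁ + n * ω₂))) := by
      rw [show x k - n = (u - (k * ω₁ + n * ω₂)) / ω₂ by simp only [hx]; field_simp; ring]
      simp [div_eq_mul_inv]
    have e1 : 1 / (x (k - 1) - n) = ω₂ * (1 / (u + ω₁ - (k * ω₁ + n * ω₂))) := by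
      rw [show x (k - 1) - n = (u + ω₁ - (k * ω₁ + n * ω₂)) / ω₂ by
        simp only [hx]; push_cast; field_simp; ring]
      simp [div_eq_mul_inv]
    have e2 : 1 / (x k + 1 - n) = ω₂ * (1 / (u + ω₂ - (k * ω₁ + n * ω₂))) := by
      rw [show x k + 1 - n = (u + ω₂ - (k * ω₁ + n * ω₂)) / ω₂ by
        simp only [hx]; field_simp; ring]
      simp [div_eq_mul_inv]
    rw [e0, e1, e2]
    unfold zetaTerm
    split_ifs with h
    · obtain ⟨rfl, rfl⟩ := Prod.mk.inj h
      simp only [Int.cast_zero, zero_mul, add_zero, sub_zero]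
      field_simp
    · simp only
      generalize 1 / (u + ω₂ - (k * ω₁ + n * ω₂)) = A
      generalize 1 / (u + ω₁ - (k * ω₁ + n * ω₂)) = B
      generalize 1 / (u - (k * ω₁ + n * ω₂)) = C
      rw [show ω₁ / ω₂ * (ω₂ * A - ω₂ * C) = ω₁ * (A - C) by field_simp]
      ring
  set F : ℤ → ℂ := fun k ↦ Real.pi * cot (Real.pi * x k) with hF
  have hinner (k : ℤ) : HasSum (fun n : ℤ ↦
      ω₁ * (zetaTerm ω₁ ω₂ (u + ω₂) (k, n) - zetaTerm ω₁ ω₂ u (k, n))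
        - ω₂ * (zetaTerm ω₁ ω₂ (u + ω₁) (k, n) - zetaTerm ω₁ ω₂ u (k, n)))
      (F k - F (k - 1)) := by
    have hs := (hsum.summable.prod_factor k).hasSum
    -- The row is absolutely summable, so its symmetric partial sums determine its sum.
    have hlim := ((((tendsto_sum_inv_sub (hxZ1 k)).sub (tendsto_sum_inv_sub (hxZ k))).const_mul
      (ω₁ / ω₂)).sub ((tendsto_sum_inv_sub (hxZ (k - 1))).sub (tendsto_sum_inv_sub (hxZ k))))
    rw [cot_pi_add_one, sub_self, mul_zero, zero_sub, neg_sub] at hlim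
    have heq := tendsto_nhds_unique hs.tendsto_symm_Icc (hlim.congr fun N ↦ by
      simp only [← Finset.sum_sub_distrib, Finset.mul_sum, hterm])
    rwa [heq] at hs
  have houter := (hsum.prod_fiberwise hinner).tendsto_symm_Icc
  simp only [sum_symm_Icc_telescope] at houter
  have him (k : ℤ) : (x k).im = (u / ω₂).im - k * (ω₁ / ω₂).im := by
    have : x k = u / ω₂ - (k : ℝ) * (ω₁ / ω₂) := by
      simp only [hx]
      push_cast
      ring
    rw [this, sub_im, im_ofReal_mul]
  have hN : Tendsto (fun N : ℕ ↦ (N : ℝ) * (ω₁ / ω₂).im) atTop atTop :=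
    tendsto_natCast_atTop_atTop.atTop_mul_const hτ
  have htop : Tendsto (fun N : ℕ ↦ (x (-(N + 1))).im) atTop atTop := by
    refine (tendsto_atTop_add_const_right _ ((u / ω₂).im + (ω₁ / ω₂).im) hN).congr fun N ↦ ?_
    rw [him]
    push_cast
    ring
  have hbot : Tendsto (fun N : ℕ ↦ (x N).im) atTop atBot := by
    refine (tendsto_atBot_add_const_right _ (u / ω₂).im
      (tendsto_neg_atTop_atBot.comp hN)).congr fun N ↦ ?_
    rw [him]
    simp only [Function.comp_apply]
    push_cast
    ring
  have hlim := ((tendsto_cot_of_im_atBot hbot).const_mul (Real.pi : ℂ)).sub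
    ((tendsto_cot_of_im_atTop htop).const_mul (Real.pi : ℂ))
  rw [tendsto_nhds_unique houter hlim]
  ring
end

section
/- PSL₂(ℤ)-equivariance of p: for all integers a, b, c, d with ad − bc = 1 and all τ ∈ ℍ such that E2(τ) ≠ 0, E2((aτ + b)/(cτ + d)) ≠ 0, and c·p(τ) + d ≠ 0, one has p((aτ + b)/(cτ + d)) = (a·p(τ) + b)/(c·p(τ) + d). -/
/-!
The series `E2` of the statement agrees on the upper half-plane with Mathlib's normalised weight-2
Eisenstein series, whose quasi-modularity reads, with `j = cτ + d`,
`E₂((aτ + b)/j) = j² E₂(τ) - (6i/π) c j`.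
Writing `k = 6i/π` and `E = E₂(τ)`, this gives `c p(τ) + d = (jE - kc)/E` and
`E₂((aτ + b)/j) = j (jE - kc)`, so both sides of the equivariance relation become fractions with
denominators `j (jE - kc)` and `jE - kc`; they agree because `a j - c (aτ + b) = ad - bc = 1`.
-/

/-- `q = exp(2πiτ)`. -/
noncomputable def qexp (τ : ℂ) : ℂ := Complex.exp (2 * Real.pi * Complex.I * τ)

/-- Divisor power sum `σ_k(n) = ∑_{d | n} d^k`, as a complex number. -/
noncomputable def sigmaC (k n : ℕ) : ℂ := ∑ d ∈ Nat.divisors n, (d : ℂ) ^ k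

/-- Eisenstein series `E₂`. -/
noncomputable def E2 (τ : ℂ) : ℂ := 1 - 24 * ∑' n : ℕ, sigmaC 1 (n + 1) * qexp τ ^ (n + 1)

/-- Eisenstein series `E₄`. -/
noncomputable def E4 (τ : ℂ) : ℂ := 1 + 240 * ∑' n : ℕ, sigmaC 3 (n + 1) * qexp τ ^ (n + 1)

/-- Eisenstein series `E₆`. -/
noncomputable def E6 (τ : ℂ) : ℂ := 1 - 504 * ∑' n : ℕ, sigmaC 5 (n + 1) * qexp τ ^ (n + 1)

/-- The discriminant form `Δ = (E₄³ - E₆²)/1728`. -/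
noncomputable def Δfun (τ : ℂ) : ℂ := (E4 τ ^ 3 - E6 τ ^ 2) / 1728

/-- The ratio of quasi-periods `p(τ) = τ - 6i/(π E₂(τ))`. -/
noncomputable def pfun (τ : ℂ) : ℂ := τ - 6 * Complex.I / (Real.pi * E2 τ)

/-- The `q`-series `E2` is Mathlib's `E2`, defined there by conditional summation over lattice
points, at points of the upper half-plane. -/
theorem E2_eq_mathlib (z : UpperHalfPlane) : E2 (z : ℂ) = EisensteinSeries.E2 z := by
  rw [EisensteinSeries.E2_eq_tsum_cexp,
    tsum_pnat_eq_tsum_succ (f := fun n ↦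
      (ArithmeticFunction.sigma 1 n : ℂ) * Complex.exp (2 * Real.pi * Complex.I * z) ^ n)]
  simp [E2, sigmaC, qexp, ArithmeticFunction.sigma_apply]

/-- Quasi-modularity of `E2` under an arbitrary element of `SL₂(ℤ)`. -/
theorem E2_quasimodular (a b c d : ℤ) (h : a * d - b * c = 1) (τ : ℂ) (hτ : 0 < τ.im)
    (hj : (c : ℂ) * τ + d ≠ 0) :
    E2 (((a : ℂ) * τ + b) / ((c : ℂ) * τ + d))
      = ((c : ℂ) * τ + d) *
        (((c : ℂ) * τ + d) * E2 τ - 6 * Complex.I / Real.pi * c) := by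
  let γ : Matrix.SpecialLinearGroup (Fin 2) ℤ :=
    ⟨!![a, b; c, d], by rw [Matrix.det_fin_two_of]; exact h⟩
  let z : UpperHalfPlane := ⟨τ, hτ⟩
  have hcoe : ((γ • z : UpperHalfPlane) : ℂ) = ((a : ℂ) * τ + b) / ((c : ℂ) * τ + d) := by
    rw [UpperHalfPlane.coe_specialLinearGroup_apply]
    simp [γ, z]
  have hdenom : UpperHalfPlane.denom γ z = (c : ℂ) * τ + d := by
    rw [ModularGroup.denom_apply]
    simp [γ, z]
  have hslash := congrFun (EisensteinSeries.E2_slash_action γ) z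
  have hc : γ 1 0 = c := rfl
  have hz : (z : ℂ) = τ := rfl
  rw [hz] at hdenom
  rw [ModularForm.SL_slash_apply] at hslash
  simp only [Pi.sub_apply, Pi.smul_apply, smul_eq_mul, EisensteinSeries.D2, hc,
    ← E2_eq_mathlib, hcoe, hz, hdenom, riemannZeta_two, zpow_neg] at hslash
  have hpi : (Real.pi : ℂ) ≠ 0 := by exact_mod_cast Real.pi_ne_zero
  rw [← div_eq_mul_inv, div_eq_iff (zpow_ne_zero _ hj)] at hslash
  rw [hslash]
  field_simp

/-- `PSL₂(ℤ)`-equivariance of `p`: `p(Sτ) = S(p(τ))` for `S` in the modular group. -/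
theorem p_modular_equivariance (a b c d : ℤ) (h : a * d - b * c = 1)
    (τ : ℂ) (hτ : 0 < τ.im) (hE : E2 τ ≠ 0)
    (hE' : E2 (((a : ℂ) * τ + b) / ((c : ℂ) * τ + d)) ≠ 0)
    (hden : (c : ℂ) * pfun τ + d ≠ 0) :
    pfun (((a : ℂ) * τ + b) / ((c : ℂ) * τ + d))
      = ((a : ℂ) * pfun τ + b) / ((c : ℂ) * pfun τ + d) := by
  have hdet : (a : ℂ) * d - b * c = 1 := by exact_mod_cast h
  -- `cτ + d = 0` would force `c = 0`, hence `d = 0`, contradicting `ad - bc = 1`.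
  have hj : (c : ℂ) * τ + d ≠ 0 := by
    intro h0
    have him := congrArg Complex.im h0
    have hc : c = 0 := by simpa [hτ.ne'] using him
    have hd : d = 0 := by simpa [hc] using h0
    simp [hc, hd] at h
  have hq := E2_quasimodular a b c d h τ hτ hj
  obtain ⟨k, hk⟩ : ∃ k : ℂ, k = 6 * Complex.I / Real.pi := ⟨_, rfl⟩
  have hp : ∀ w : ℂ, pfun w = w - k / E2 w := fun w ↦ by
    rw [pfun, hk, div_div]
  rw [← hk] at hq
  have hm : ((c : ℂ) * τ + d) * E2 τ - k * c ≠ 0 := fun h0 ↦ hE' (by rw [hq, h0, mul_zero])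
  have hcp : (c : ℂ) * pfun τ + d = (((c : ℂ) * τ + d) * E2 τ - k * c) / E2 τ := by
    rw [hp]
    field_simp
    ring
  have hap : (a : ℂ) * pfun τ + b = (((a : ℂ) * τ + b) * E2 τ - k * a) / E2 τ := by
    rw [hp]
    field_simp
    ring
  rw [hcp, hap, div_div_div_cancel_right₀ hE, hp, hq, eq_div_iff hm, sub_mul, div_mul_eq_mul_div,
    div_mul_eq_mul_div, mul_div_mul_right _ _ hm, ← sub_div, div_eq_iff hj]
  linear_combination k * hdet
end

section
/- Ramanujan identity for E4: for all τ ∈ ℍ, (1/(2πi)) · E4'(τ) = (E2(τ)·E4(τ) − E6(τ))/3, where E4' denotes the complex derivative of E4. -/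
open UpperHalfPlane ModularForm MatrixGroups Filter
open scoped Topology Manifold ModularForm Derivative ArithmeticFunction.sigma

/-! ### Comparison with Mathlib's Eisenstein series -/

lemma sigmaC_eq (k n : ℕ) : sigmaC k n = (σ k n : ℂ) := by
  simp [sigmaC, ArithmeticFunction.sigma_apply]

/-- The series over `ℕ` shifted by one is the series over the positive integers. -/
lemma tsum_sigmaC_eq (k : ℕ) (z : ℂ) :
    ∑' n : ℕ, sigmaC k (n + 1) * qexp z ^ (n + 1) =
      ∑' n : ℕ+, (σ k n : ℂ) * Complex.exp (2 * Real.pi * Complex.I * z) ^ (n : ℕ) := by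
  rw [tsum_pnat_eq_tsum_succ
    (f := fun n : ℕ ↦ (σ k n : ℂ) * Complex.exp (2 * Real.pi * Complex.I * z) ^ n)]
  simp [sigmaC_eq, qexp]

lemma E2_coe (z : ℍ) : E2 z = EisensteinSeries.E2 z := by
  rw [E2, tsum_sigmaC_eq, EisensteinSeries.E2_eq_tsum_cexp]

lemma E4_coe (z : ℍ) : E4 z = E₄ z := by
  have h := EisensteinSeries.q_expansion_bernoulli (k := 4) (by norm_num) ⟨2, rfl⟩ z
  simp only [zpow_natCast, show bernoulli 4 = -1 / 30 by decide +kernel] at h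
  rw [E4, tsum_sigmaC_eq, h]
  norm_num

lemma E6_coe (z : ℍ) : E6 z = E₆ z := by
  have h := EisensteinSeries.q_expansion_bernoulli (k := 6) (by norm_num) ⟨3, rfl⟩ z
  simp only [zpow_natCast, show bernoulli 6 = 1 / 42 by decide +kernel] at h
  rw [E6, tsum_sigmaC_eq, h]
  norm_num

/-! ### Behaviour at the cusp -/

/-- A function given by a convergent `q`-expansion tends to its constant coefficient at `i∞`:
after subtracting it, the function is `q` times another `q`-expansion, which is bounded. -/
lemma tendsto_of_hasSum_qExpansion {f : ℍ → ℂ} {c : ℕ → ℂ}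
    (hf : ∀ τ : ℍ, HasSum (fun m ↦ c m • Function.Periodic.qParam 1 τ ^ m) (f τ)) :
    Tendsto f atImInfty (𝓝 (c 0)) := by
  set g : ℍ → ℂ := fun τ ↦ (f τ - c 0) / Function.Periodic.qParam 1 τ with hg
  have hq (τ : ℍ) : Function.Periodic.qParam 1 (τ : ℂ) ≠ 0 := Complex.exp_ne_zero _
  have hgb : IsBoundedAtImInfty g := by
    refine isBoundedAtImInfty_of_hasSum_qExpansion (c := fun m ↦ c (m + 1)) one_pos fun τ ↦ ?_
    have h := ((hasSum_nat_add_iff' 1).mpr (hf τ)).div_const (Function.Periodic.qParam 1 (τ : ℂ))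
    convert! h using 1
    · funext m
      rw [smul_eq_mul, smul_eq_mul, pow_succ, ← mul_assoc, mul_div_cancel_right₀ _ (hq τ)]
    · simp [hg]
  have h0 : Tendsto (fun τ : ℍ ↦ Function.Periodic.qParam 1 τ * g τ) atImInfty (𝓝 0) := by
    have ho := ((Asymptotics.isLittleO_one_iff ℝ).mpr
      (qParam_tendsto_atImInfty one_pos)).mul_isBigO hgb
    exact (Asymptotics.isLittleO_one_iff ℝ).mp (by simpa using! ho)
  have h1 := h0.add_const (c 0)
  rw [zero_add] at h1
  refine h1.congr fun τ ↦ ?_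
  rw [hg]
  field_simp [hq τ]
  ring

lemma tendsto_E2 : Tendsto EisensteinSeries.E2 atImInfty (𝓝 1) := by
  simpa using tendsto_of_hasSum_qExpansion
    (c := fun m ↦ if m = 0 then 1 else -24 * (σ 1 m : ℂ)) fun τ ↦ by
    simpa only [Function.Periodic.qParam, Complex.ofReal_one, div_one] using
      EisensteinSeries.hasSum_qExpansion_E2 (z := τ)

lemma tendsto_E {k : ℕ} (hk : 3 ≤ k) (hk2 : Even k) : Tendsto (E hk) atImInfty (𝓝 1) := by
  rw [← EisensteinSeries.E_qExpansion_coeff_zero hk hk2]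
  exact tendsto_of_hasSum_qExpansion
    (ModularForm.hasSum_qExpansion (E hk) one_pos one_mem_strictPeriods_SL)

/-- With `F` the function on the unit disc such that `f(τ) = F(q)`, one has `D f = q F'(q)`,
and `q F'(q) → 0` because `F` is analytic at `0`. -/
lemma tendsto_normalizedDeriv {k : ℤ} (f : ModularForm 𝒮ℒ k) :
    Tendsto (Derivative.normalizedDerivOfComplex f) atImInfty (𝓝 0) := by
  have hper := SlashInvariantFormClass.periodic_comp_ofComplex f one_mem_strictPeriods_SL
  have hdiff {q : ℂ} (hq : ‖q‖ < 1) : DifferentiableAt ℂ (cuspFunction 1 f) q :=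
    ModularFormClass.differentiableAt_cuspFunction f one_pos one_mem_strictPeriods_SL hq
  have hcont : ContinuousAt (deriv (cuspFunction 1 f)) 0 :=
    (analyticAt_cuspFunction_zero one_pos hper (ModularFormClass.holo f)
      (ModularFormClass.bdd_at_infty f)).deriv.continuousAt
  have hq := qParam_tendsto_atImInfty one_pos
  have key : Tendsto (fun τ : ℍ ↦ deriv (cuspFunction 1 f) (Function.Periodic.qParam 1 τ) *
      Function.Periodic.qParam 1 τ) atImInfty (𝓝 0) := by
    simpa using (hcont.tendsto.comp hq).mul hq
  refine key.congr fun τ ↦ ?_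
  have hfun : (f ∘ ofComplex : ℂ → ℂ) =
      cuspFunction 1 f ∘ Function.Periodic.qParam 1 := by
    ext z
    exact (Function.Periodic.eq_cuspFunction one_ne_zero hper z).symm
  have hqd : HasDerivAt (Function.Periodic.qParam 1)
      (2 * Real.pi * Complex.I * Function.Periodic.qParam 1 (τ : ℂ)) (τ : ℂ) := by
    have h := ((hasDerivAt_id (τ : ℂ)).const_mul (2 * Real.pi * Complex.I)).cexp
    rw [show Function.Periodic.qParam 1 =
      fun w : ℂ ↦ Complex.exp (2 * Real.pi * Complex.I * w) by
        ext w; simp [Function.Periodic.qParam]]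
    simpa [mul_comm] using! h
  have hd := (hdiff (Function.Periodic.norm_qParam_lt_one one_pos τ.im_pos)).hasDerivAt.comp _ hqd
  rw [Derivative.normalizedDerivOfComplex, hfun, hd.deriv]
  field_simp [Complex.two_pi_I_ne_zero]

/-! ### The cusp form -/

/-- The weight-`6` function `∂₄E₄ + E₆/3` on the upper half-plane. -/
noncomputable def ramanujanForm : ℍ → ℂ :=
  Derivative.serreDerivative 4 E₄ + (3⁻¹ : ℂ) • ⇑E₆

lemma ramanujanForm_slash (γ : SL(2, ℤ)) : ramanujanForm ∣[(6 : ℤ)] γ = ramanujanForm := by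
  have hγ : (γ : GL (Fin 2) ℝ) ∈ 𝒮ℒ := ⟨γ, rfl⟩
  have h4 : (⇑E₄) ∣[(4 : ℤ)] γ = ⇑E₄ := SlashInvariantFormClass.slash_action_eq E₄ _ hγ
  have h6 : (⇑E₆) ∣[(6 : ℤ)] γ = ⇑E₆ := SlashInvariantFormClass.slash_action_eq E₆ _ hγ
  have hS := Derivative.serreDerivative_slash_invariant (ModularFormClass.holo E₄) h4
  rw [show (4 : ℤ) + 2 = 6 by norm_num, Int.cast_ofNat] at hS
  rw [ramanujanForm, SlashAction.add_slash, SL_smul_slash, hS, h6]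

lemma isZeroAtImInfty_ramanujanForm : IsZeroAtImInfty ramanujanForm := by
  have h := ((tendsto_normalizedDeriv E₄).sub
    ((tendsto_E2.const_mul (4 * 12⁻¹ : ℂ)).mul (tendsto_E (k := 4) (by norm_num) ⟨2, rfl⟩))).add
    ((tendsto_E (k := 6) (by norm_num) ⟨3, rfl⟩).const_mul (3⁻¹ : ℂ))
  norm_num at h
  refine h.congr fun z ↦ ?_
  simp only [ramanujanForm, Pi.add_apply, Pi.smul_apply, Derivative.serreDerivative_apply,
    smul_eq_mul]
  norm_num

/-- `∂₄E₄ + E₆/3` as a cusp form of weight `6` and level one. -/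
noncomputable def ramanujanCuspForm : CuspForm 𝒮ℒ 6 where
  toFun := ramanujanForm
  slash_action_eq' := fun _ ⟨γ, hγ⟩ ↦ hγ ▸ ramanujanForm_slash γ
  holo' := (Derivative.serreDerivative_mdifferentiable 4 (ModularFormClass.holo E₄)).add
    ((ModularFormClass.holo E₆).const_smul (3⁻¹ : ℂ))
  zero_at_cusps' hc := by
    rw [Subgroup.IsArithmetic.isCusp_iff_isCusp_SL2Z] at hc
    rw [OnePoint.isZeroAt_iff_forall_SL2Z hc]
    intro γ _
    rw [ramanujanForm_slash]
    exact isZeroAtImInfty_ramanujanForm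

lemma ramanujanForm_eq_zero (z : ℍ) : ramanujanForm z = 0 := by
  have h : ramanujanCuspForm = 0 :=
    rank_zero_iff_forall_zero.mp (CuspForm.rank_eq_zero_of_weight_lt_twelve (by norm_num)) _
  exact DFunLike.congr_fun h z

/-- Ramanujan's identity `(1/(2πi)) E₄' = (E₂E₄ - E₆)/3`. -/
theorem ramanujan_E4 (τ : ℂ) (hτ : 0 < τ.im) :
    HasDerivAt E4 (2 * Real.pi * Complex.I * ((E2 τ * E4 τ - E6 τ) / 3)) τ := by
  let z : ℍ := ⟨τ, hτ⟩
  have heq : E4 =ᶠ[𝓝 τ] ⇑E₄ ∘ ofComplex := by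
    filter_upwards [isOpen_upperHalfPlaneSet.mem_nhds hτ] with w hw
    rw [Function.comp_apply, ofComplex_apply_of_im_pos hw, ← E4_coe]
  have hd : HasDerivAt (⇑E₄ ∘ ofComplex) (deriv (⇑E₄ ∘ ofComplex) τ) τ :=
    (UpperHalfPlane.mdifferentiableAt_iff.mp (ModularFormClass.holo E₄ z)).hasDerivAt
  have hz : (2 * Real.pi * Complex.I)⁻¹ * deriv (⇑E₄ ∘ ofComplex) τ -
      4 * 12⁻¹ * E2 τ * E4 τ + 3⁻¹ * E6 τ = 0 := by
    have h := ramanujanForm_eq_zero z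
    simp only [ramanujanForm, Pi.add_apply, Pi.smul_apply, Derivative.serreDerivative_apply,
      smul_eq_mul, ← E2_coe, ← E4_coe, ← E6_coe] at h
    exact h
  have hval : deriv (⇑E₄ ∘ ofComplex) τ =
      2 * Real.pi * Complex.I * ((E2 τ * E4 τ - E6 τ) / 3) := by
    have hinv : (2 * Real.pi * Complex.I) * ((2 * Real.pi * Complex.I)⁻¹ *
        deriv (⇑E₄ ∘ ofComplex) τ) = deriv (⇑E₄ ∘ ofComplex) τ :=
      mul_inv_cancel_left₀ Complex.two_pi_I_ne_zero _
    linear_combination (2 * Real.pi * Complex.I) * hz - hinv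
  exact (hval ▸ hd).congr_of_eventuallyEq heq
end

section
/- Product formula for Δ: for all τ ∈ ℍ, Δ(τ) = q · ∏_{n=1}^∞ (1 − qⁿ)²⁴, where q = exp(2πiτ). In particular, Δ(τ) ≠ 0 for all τ ∈ ℍ. -/
/-- The two ways of writing the divisor-sum `q`-series agree: Mathlib's runs over `ℕ+`, with `σ`
taking values in `ℕ`; the one used here is shifted to run over `ℕ`. -/
lemma tsum_sigma_eq (k : ℕ) (z : UpperHalfPlane) :
    ∑' n : ℕ+, (ArithmeticFunction.sigma k n : ℂ) *
        Complex.exp (2 * Real.pi * Complex.I * z) ^ (n : ℤ) =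
      ∑' n : ℕ, sigmaC k (n + 1) * qexp z ^ (n + 1) := by
  rw [← tsum_pnat_eq_tsum_succ (f := fun n : ℕ ↦ sigmaC k n * qexp z ^ n)]
  refine tsum_congr fun n ↦ ?_
  simp [sigmaC, qexp, ArithmeticFunction.sigma_apply]

lemma E4_eq (z : UpperHalfPlane) : E4 z = ModularForm.E₄ z := by
  have hB : bernoulli 4 = -1 / 30 := by
    rw [bernoulli_eq_bernoulli'_of_ne_one (by decide), bernoulli'_four]
  rw [EisensteinSeries.q_expansion_bernoulli _ (by decide), tsum_sigma_eq, hB, E4]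
  push_cast
  ring

lemma E6_eq (z : UpperHalfPlane) : E6 z = ModularForm.E₆ z := by
  have hB : bernoulli 6 = 1 / 42 := by
    rw [bernoulli_eq_bernoulli'_of_ne_one (by decide), bernoulli'_def]
    norm_num [Finset.sum_range_succ, Nat.choose,
      bernoulli'_eq_zero_of_odd (n := 5) (by decide) (by decide)]
  rw [EisensteinSeries.q_expansion_bernoulli _ (by decide), tsum_sigma_eq, hB, E6]
  push_cast
  ring

/-- The product formula `Δ = q ∏_{n≥1} (1 - qⁿ)²⁴`; in particular `Δ` has no zeros on `ℍ`. -/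
theorem delta_product_formula (τ : ℂ) (hτ : 0 < τ.im) :
    Δfun τ = qexp τ * ∏' n : ℕ, (1 - qexp τ ^ (n + 1)) ^ 24 ∧ Δfun τ ≠ 0 := by
  have h : Δfun τ = ModularForm.discriminant ⟨τ, hτ⟩ := by
    rw [ModularForm.discriminant_eq_E₄_cube_sub_E₆_sq, ← E4_eq, ← E6_eq, Δfun]
  refine ⟨?_, h ▸ ModularForm.discriminant_ne_zero _⟩
  rw [h, ModularForm.discriminant_eq_q_prod]
  simp [ModularForm.eta_q, Function.Periodic.qParam, qexp]
end

section
/- E4 vanishes at ρ := (1 + i√3)/2, i.e. E4((1 + i√3)/2) = 0. -/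
open UpperHalfPlane in
/-- The series `E4` is the level one modular form `ModularForm.E₄` of weight `4`. -/
lemma E4_eq_eisenstein (z : ℍ) : E4 z = ModularForm.E₄ z := by
  have hb : bernoulli 4 = -1 / 30 := by
    rw [bernoulli_eq_bernoulli'_of_ne_one (by norm_num), bernoulli'_four]
  have h := EisensteinSeries.q_expansion_bernoulli (k := 4) (by norm_num) (by decide) z
  rw [h, hb, E4]
  rw [tsum_pnat_eq_tsum_succ (f := fun n : ℕ =>
    (ArithmeticFunction.sigma (4 - 1) n : ℂ) * Complex.exp (2 * Real.pi * Complex.I * z) ^ (n : ℤ))]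
  have hs : ∀ n : ℕ, sigmaC 3 n = (ArithmeticFunction.sigma (4 - 1) n : ℂ) := by
    intro n
    simp [sigmaC, ArithmeticFunction.sigma_apply]
  simp only [hs, qexp, zpow_natCast]
  push_cast
  ring

/-- `E₄` vanishes at `ρ = (1 + i√3)/2`. -/
theorem E4_vanishes_at_rho : E4 ((1 + Complex.I * Real.sqrt 3) / 2) = 0 := by
  set ρ : ℂ := (1 + Complex.I * Real.sqrt 3) / 2 with hρ
  have him : ρ.im = Real.sqrt 3 / 2 := by simp [hρ]
  have hpos : 0 < ρ.im := by rw [him]; positivity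
  have hsq : ρ ^ 2 = ρ - 1 := by
    have h3 : ((Real.sqrt 3 : ℝ) : ℂ) ^ 2 = 3 := by
      rw [← Complex.ofReal_pow, Real.sq_sqrt (by norm_num)]; norm_num
    rw [hρ]
    linear_combination (1 / 4 : ℂ) * (Real.sqrt 3 : ℂ) ^ 2 * Complex.I_sq - (1 / 4 : ℂ) * h3
  have hne : ρ ≠ 0 := by
    intro h
    simp [h] at hpos
  let z : UpperHalfPlane := ⟨ρ, hpos⟩
  let γ : Matrix.SpecialLinearGroup (Fin 2) ℤ := ⟨!![1, -1; 1, 0], by simp⟩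
  have hfix : γ • z = z := by
    ext
    rw [UpperHalfPlane.coe_specialLinearGroup_apply]
    simp only [γ, z]
    simp
    field_simp
    linear_combination -hsq
  have hmod : ModularForm.E₄ (γ • z) =
      UpperHalfPlane.denom γ z ^ (4 : ℤ) * ModularForm.E₄ z :=
    SlashInvariantForm.slash_action_eqn'' ModularForm.E₄
      (MonoidHom.mem_range.mpr ⟨γ, rfl⟩) z
  have hden : UpperHalfPlane.denom γ z = ρ := by
    change (((1 : ℤ) : ℝ) : ℂ) * ρ + (((0 : ℤ) : ℝ) : ℂ) = ρ
    simp
  rw [hfix, hden, ← E4_eq_eisenstein] at hmod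
  -- The weight `4 : ℤ` is replaced by a natural number exponent.
  change E4 ρ = ρ ^ (4 : ℕ) * E4 ρ at hmod
  have h4 : ρ ^ 4 = -ρ := by linear_combination (ρ ^ 2 + ρ) * hsq
  rw [h4] at hmod
  have hfac : (1 + ρ) * E4 ρ = 0 := by linear_combination hmod
  refine (mul_eq_zero.mp hfac).resolve_left fun h => hpos.ne' ?_
  rw [eq_neg_of_add_eq_zero_right h]
  simp
end
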